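/- Let G be a simple graph on a finite vertex set V with N = |V| vertices and adjacency matrix A (so A_{ij} = 1 if i and j are adjacent and 0 otherwise). Then for every η : V → ℝ and every x : V → {−1, 1}, the cut value Σ_{{i,j} ∈ E(G)} (1 − x_i x_j)/2 is at most |E(G)|/2 + Σ_{i ∈ V} η_i − N·λ_min((1/4)A + diag(η)), where diag(η) is the diagonal matrix with diagonal entries η_i. -/

import Mathlib

open Matrix BigOperators

/-- Least eigenvalue of a real symmetric (Hermitian) matrix (junk value `0` otherwise). -/
noncomputable def lambdaMin {V : Type*} [Fintype V] [DecidableEq V] (M : Matrix V V ℝ) : ℝ :=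
  if h : M.IsHermitian then ⨅ i, h.eigenvalues i else 0

/-- The cut value `Σ_{{i,j} ∈ E(G)} (1 - x_i x_j)/2` of an assignment `x`. -/
noncomputable def cutValue {V : Type*} [Fintype V] [DecidableEq V]
    (G : SimpleGraph V) [DecidableRel G.Adj] (x : V → ℝ) : ℝ :=
  ∑ e ∈ G.edgeFinset, Sym2.lift ⟨fun i j => (1 - x i * x j) / 2, fun i j => by ring⟩ e

/-- Summing a function of edges over all ordered pairs of adjacent vertices counts each edge
twice. -/
theorem SimpleGraph.sum_sum_adj_eq_two_nsmul_sum_edgeFinset {V M : Type*} [Fintype V]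
    [DecidableEq V] [AddCommMonoid M] (G : SimpleGraph V) [DecidableRel G.Adj] (f : Sym2 V → M) :
    ∑ i, ∑ j, (if G.Adj i j then f s(i, j) else 0) = 2 • ∑ e ∈ G.edgeFinset, f e := by
  have hdart : ∑ i, ∑ j, (if G.Adj i j then f s(i, j) else 0) = ∑ d : G.Dart, f d.edge := by
    rw [← Fintype.sum_prod_type', ← Finset.sum_filter]
    exact Finset.sum_bij' (fun p h => ⟨p, (Finset.mem_filter.1 h).2⟩) (fun d _ => d.toProd)
      (by simp) (by simp) (by simp) (by simp) (fun _ _ => rfl)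
  rw [hdart, ← Finset.sum_fiberwise_of_maps_to (t := G.edgeFinset) (g := SimpleGraph.Dart.edge)
    (fun d _ => SimpleGraph.mem_edgeFinset.2 d.edge_mem), Finset.smul_sum]
  refine Finset.sum_congr rfl fun e he => ?_
  rw [Finset.sum_congr rfl fun d hd => congrArg f (Finset.mem_filter.1 hd).2, Finset.sum_const,
    G.dart_edge_fiber_card e (SimpleGraph.mem_edgeFinset.1 he)]

/-- A lower bound on the eigenvalues of a real symmetric matrix bounds its quadratic form. -/
theorem Matrix.IsHermitian.mul_dotProduct_self_le {V : Type*} [Fintype V] [DecidableEq V]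
    {M : Matrix V V ℝ} (hM : M.IsHermitian) {c : ℝ} (hc : ∀ i, c ≤ hM.eigenvalues i)
    (x : V → ℝ) : c * (x ⬝ᵥ x) ≤ x ⬝ᵥ M *ᵥ x := by
  let U : Matrix V V ℝ := hM.eigenvectorUnitary
  have hU : U * Uᴴ = 1 := Unitary.coe_mul_star_self hM.eigenvectorUnitary
  have hspec : M = U * diagonal hM.eigenvalues * Uᴴ := hM.spectral_theorem
  have hshift : M - c • 1 = U * diagonal (fun i => hM.eigenvalues i - c) * Uᴴ := by
    have hdiag : diagonal (fun i => hM.eigenvalues i - c) = diagonal hM.eigenvalues - c • 1 := by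
      rw [smul_one_eq_diagonal, diagonal_sub]
    rw [hdiag, mul_sub, sub_mul, ← hspec, mul_smul_comm, mul_one, smul_mul_assoc, hU]
  have hpsd : (M - c • 1).PosSemidef := by
    rw [hshift]
    exact (PosSemidef.diagonal fun i => sub_nonneg.2 (hc i)).mul_mul_conjTranspose_same U
  have hnonneg := hpsd.dotProduct_mulVec_nonneg x
  rw [star_trivial, sub_mulVec, smul_mulVec, one_mulVec, dotProduct_sub, dotProduct_smul,
    smul_eq_mul] at hnonneg
  linarith

/-- The least eigenvalue bounds the quadratic form of a real symmetric matrix. -/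
theorem Matrix.IsHermitian.lambdaMin_mul_dotProduct_self_le {V : Type*} [Fintype V]
    [DecidableEq V] {M : Matrix V V ℝ} (hM : M.IsHermitian) (x : V → ℝ) :
    lambdaMin M * (x ⬝ᵥ x) ≤ x ⬝ᵥ M *ᵥ x := by
  rw [lambdaMin, dif_pos hM]
  exact hM.mul_dotProduct_self_le (fun i => ciInf_le (Set.finite_range _).bddBelow i) x

/-- The cut value in terms of the quadratic form of the adjacency matrix. -/
theorem cutValue_eq_sub_dotProduct_adjMatrix {V : Type*} [Fintype V] [DecidableEq V]
    (G : SimpleGraph V) [DecidableRel G.Adj] (x : V → ℝ) :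
    cutValue G x = (G.edgeFinset.card : ℝ) / 2 - 1 / 4 * (x ⬝ᵥ G.adjMatrix ℝ *ᵥ x) := by
  have hcut := G.sum_sum_adj_eq_two_nsmul_sum_edgeFinset
    (Sym2.lift ⟨fun i j => (1 - x i * x j) / 2, fun i j => by ring⟩)
  have hcard := G.sum_sum_adj_eq_two_nsmul_sum_edgeFinset (fun _ => (1 : ℝ))
  have hquad : x ⬝ᵥ G.adjMatrix ℝ *ᵥ x =
      ∑ i, ∑ j, ((if G.Adj i j then (1 : ℝ) else 0)
        - 2 * if G.Adj i j then (1 - x i * x j) / 2 else 0) := by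
    rw [SimpleGraph.dotProduct_mulVec_adjMatrix]
    refine Finset.sum_congr rfl fun i _ => Finset.sum_congr rfl fun j _ => ?_
    split_ifs <;> ring
  simp only [Sym2.lift_mk, nsmul_eq_mul, Nat.cast_ofNat] at hcut
  simp only [Finset.sum_const, nsmul_eq_mul, mul_one, Nat.cast_ofNat] at hcard
  simp only [Finset.sum_sub_distrib, ← Finset.mul_sum, hcut, hcard] at hquad
  rw [hquad, cutValue]
  ring

/-- the spectral dual certificate bounds every cut of `G`. -/
theorem maxcut_dual_certificate {V : Type*} [Fintype V] [DecidableEq V]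
    (G : SimpleGraph V) [DecidableRel G.Adj]
    (η : V → ℝ) (x : V → ℝ) (hx : ∀ i, x i = 1 ∨ x i = -1) :
    cutValue G x ≤
      (G.edgeFinset.card : ℝ) / 2 + ∑ i, η i
        - (Fintype.card V : ℝ) *
            lambdaMin ((1 / 4 : ℝ) • G.adjMatrix ℝ + Matrix.diagonal η) := by
  have hsq : ∀ i, x i * x i = 1 := fun i => by rcases hx i with h | h <;> simp [h]
  have hM : ((1 / 4 : ℝ) • G.adjMatrix ℝ + diagonal η).IsHermitian := by
    rw [IsHermitian, conjTranspose_eq_transpose_of_trivial, transpose_add, transpose_smul,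
      SimpleGraph.transpose_adjMatrix, diagonal_transpose]
  have hnorm : x ⬝ᵥ x = Fintype.card V := by simp [dotProduct, hsq]
  have hdiag : x ⬝ᵥ diagonal η *ᵥ x = ∑ i, η i := by
    refine Finset.sum_congr rfl fun i _ => ?_
    rw [mulVec_diagonal, mul_left_comm, hsq, mul_one]
  have hle := hM.lambdaMin_mul_dotProduct_self_le x
  rw [hnorm, add_mulVec, smul_mulVec, dotProduct_add, dotProduct_smul, smul_eq_mul, hdiag] at hle
  rw [cutValue_eq_sub_dotProduct_adjMatrix]
  linarith
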